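/- Consider the polynomial optimization problem min_{v∈Ω} g(v), where g is an SOS-convex polynomial of degree at most an even integer d and Ω = {v ∈ ℝ^m : ∃ ξ ∈ ℝ^N, F_0 + Σ_i v_i F_i + Σ_t ξ_t M_t ⪰ 0}. Consider the SDP (P2): max over λ ∈ ℝ and Z ⪰ 0 of −λ subject to g(v) + λ − tr(ZF_0) − Σ_i v_i tr(ZF_i) ∈ Σ_d^2(v) and tr(ZM_t) = 0 for all t; and its dual SDP (P3): min over y ∈ ℝ^{s(m,d)} and ξ ∈ ℝ^N of Σ_{α∈N} y_α (g)_α subject to F_0 + Σ_i y_{e_i} F_i + Σ_t ξ_t M_t ⪰ 0, y_0 = 1, and Σ_{α∈N} y_α B_α ⪰ 0. Suppose Ω is compact, there exist v̄, ξ̄ with F_0 + Σ_i v̄_i F_i + Σ_t ξ̄_t M_t ≻ 0, and max(P2) = min(P3). If (ȳ, ξ̄) is a minimizer of (P3), then the point (ȳ_{e_1},…,ȳ_{e_m}) ∈ ℝ^m is a minimizer of min_{v∈Ω} g(v). -/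

import Mathlib

open MvPolynomial Matrix
open scoped BigOperators

noncomputable section

def IsSOS {m : ℕ} (p : MvPolynomial (Fin m) ℝ) : Prop :=
  ∃ (J : ℕ) (f : Fin J → MvPolynomial (Fin m) ℝ), p = ∑ j, (f j) ^ 2

def IsSOSDeg {m : ℕ} (d : ℕ) (p : MvPolynomial (Fin m) ℝ) : Prop :=
  IsSOS p ∧ p.totalDegree ≤ d

def polyHessian {m : ℕ} (f : MvPolynomial (Fin m) ℝ) :
    Matrix (Fin m) (Fin m) (MvPolynomial (Fin m) ℝ) :=
  Matrix.of fun i j => pderiv i (pderiv j f)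

def IsSOSConvex {m : ℕ} (f : MvPolynomial (Fin m) ℝ) : Prop :=
  ∃ (s : ℕ) (P : Matrix (Fin s) (Fin m) (MvPolynomial (Fin m) ℝ)),
    polyHessian f = Pᵀ * P

def projSpec {m N ν : ℕ} (F0 : Matrix (Fin ν) (Fin ν) ℝ)
    (F : Fin m → Matrix (Fin ν) (Fin ν) ℝ)
    (M : Fin N → Matrix (Fin ν) (Fin ν) ℝ) : Set (Fin m → ℝ) :=
  {v | ∃ ξ : Fin N → ℝ, (F0 + ∑ i, v i • F i + ∑ t, ξ t • M t).PosSemidef}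

def mdeg {m : ℕ} (α : Fin m →₀ ℕ) : ℕ := α.sum fun _ e => e

def MomMatPSD {m : ℕ} (d : ℕ) (y : (Fin m →₀ ℕ) → ℝ) : Prop :=
  ∀ c : (Fin m →₀ ℕ) →₀ ℝ, (∀ β ∈ c.support, mdeg β ≤ d / 2) →
    0 ≤ ∑ β ∈ c.support, ∑ γ ∈ c.support, c β * c γ * y (β + γ)

/-- The value set of the SDP (P2). -/
def P2vals {m N ν : ℕ} (F0 : Matrix (Fin ν) (Fin ν) ℝ)
    (F : Fin m → Matrix (Fin ν) (Fin ν) ℝ) (M : Fin N → Matrix (Fin ν) (Fin ν) ℝ)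
    (g : MvPolynomial (Fin m) ℝ) (d : ℕ) : Set ℝ :=
  {val | ∃ (lam : ℝ) (Z : Matrix (Fin ν) (Fin ν) ℝ), Z.PosSemidef ∧
    IsSOSDeg d (g + C lam - C ((Z * F0).trace)
      - ∑ i, C ((Z * F i).trace) * X i) ∧
    (∀ t, (Z * M t).trace = 0) ∧ val = -lam}

/-- Feasibility for the dual SDP (P3). -/
def P3Feasible {m N ν : ℕ} (F0 : Matrix (Fin ν) (Fin ν) ℝ)
    (F : Fin m → Matrix (Fin ν) (Fin ν) ℝ) (M : Fin N → Matrix (Fin ν) (Fin ν) ℝ)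
    (d : ℕ) (y : (Fin m →₀ ℕ) → ℝ) (ξ : Fin N → ℝ) : Prop :=
  (F0 + ∑ i, y (Finsupp.single i 1) • F i + ∑ t, ξ t • M t).PosSemidef ∧
  y 0 = 1 ∧ MomMatPSD d y

/-- The (P3) objective `Σ_α y_α (g)_α`. -/
def P3obj {m : ℕ} (g : MvPolynomial (Fin m) ℝ) (y : (Fin m →₀ ℕ) → ℝ) : ℝ :=
  ∑ α ∈ g.support, coeff α g * y α

/-- The Riesz functional of a moment sequence. -/
def riesz {m : ℕ} (y : (Fin m →₀ ℕ) → ℝ) : MvPolynomial (Fin m) ℝ →ₗ[ℝ] ℝ :=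
  (MvPolynomial.basisMonomials (Fin m) ℝ).constr ℝ y

lemma riesz_monomial {m : ℕ} (y : (Fin m →₀ ℕ) → ℝ) (α : Fin m →₀ ℕ) (c : ℝ) :
    riesz y (monomial α c) = c * y α := by
  have h : (monomial α c : MvPolynomial (Fin m) ℝ)
      = c • MvPolynomial.basisMonomials (Fin m) ℝ α := by
    simp [MvPolynomial.coe_basisMonomials, MvPolynomial.smul_monomial]
  rw [h, map_smul, riesz, Module.Basis.constr_basis, smul_eq_mul]

lemma riesz_apply {m : ℕ} (y : (Fin m →₀ ℕ) → ℝ) (g : MvPolynomial (Fin m) ℝ) :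
    riesz y g = P3obj g y := by
  conv_lhs => rw [g.as_sum]
  rw [map_sum]
  simp only [riesz_monomial, P3obj]

lemma riesz_sq_nonneg {m : ℕ} (d : ℕ) (y : (Fin m →₀ ℕ) → ℝ) (hy : MomMatPSD d y)
    (q : MvPolynomial (Fin m) ℝ) (hq : q.totalDegree ≤ d / 2) : 0 ≤ riesz y (q ^ 2) := by
  have h := hy (Finsupp.onFinset q.support (fun α => coeff α q) (by
    intro α hα; exact MvPolynomial.mem_support_iff.2 hα)) (by
    intro β hβ
    have : β ∈ q.support := by
      rw [MvPolynomial.mem_support_iff]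
      simpa using hβ
    exact (MvPolynomial.le_totalDegree this).trans hq)
  have hs : (Finsupp.onFinset q.support (fun α => coeff α q) (by
    intro α hα; exact MvPolynomial.mem_support_iff.2 hα)).support = q.support := by
    ext β
    simp
  rw [hs] at h
  have e : riesz y (q ^ 2) = ∑ β ∈ q.support, ∑ γ ∈ q.support,
      coeff β q * coeff γ q * y (β + γ) := by
    conv_lhs => rw [sq, q.as_sum]
    rw [Finset.sum_mul_sum, map_sum]
    refine Finset.sum_congr rfl fun β _ => ?_
    rw [map_sum]
    refine Finset.sum_congr rfl fun γ _ => ?_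
    rw [MvPolynomial.monomial_mul, riesz_monomial]
  rw [e]
  simpa using h

lemma sos_degree {m s : ℕ} (q : Fin s → MvPolynomial (Fin m) ℝ) (e : ℕ)
    (h : (∑ k, q k ^ 2).totalDegree ≤ 2 * e) (k : Fin s) : (q k).totalDegree ≤ e := by
  by_cases hz : ∀ j, q j = 0
  · simp [hz k]
  push Not at hz
  let o : MonomialOrder (Fin m) := MonomialOrder.degLex
  obtain ⟨j0, hj0⟩ := hz
  obtain ⟨j, hj, hmax⟩ := Finset.exists_max_image (Finset.univ.filter fun j => q j ≠ 0)
    (fun j => o.toSyn (o.degree (q j))) ⟨j0, by simpa using hj0⟩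
  have hmax' : ∀ i, o.toSyn (o.degree (q i)) ≤ o.toSyn (o.degree (q j)) := by
    intro i
    by_cases hi : q i = 0
    · rw [hi]; simp
    · exact hmax i (by simpa using hi)
  have hjne : q j ≠ 0 := by simpa using hj
  set δ := o.degree (q j) with hδ
  have hc : coeff (δ + δ) (∑ k, q k ^ 2) = ∑ k, (coeff δ (q k)) ^ 2 := by
    rw [MvPolynomial.coeff_sum]
    refine Finset.sum_congr rfl fun i _ => ?_
    rw [sq, o.coeff_mul_of_add_of_degree_le (hmax' i) (hmax' i), sq]
  have hpos : 0 < ∑ k, (coeff δ (q k)) ^ 2 := by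
    refine Finset.sum_pos' (fun _ _ => sq_nonneg _) ⟨j, Finset.mem_univ _, ?_⟩
    have : coeff δ (q j) ≠ 0 := by
      have := o.leadingCoeff_ne_zero_iff.2 hjne
      exact this
    positivity
  have hmem : δ + δ ∈ (∑ k, q k ^ 2).support := by
    rw [MvPolynomial.mem_support_iff, hc]; exact hpos.ne'
  have h1 := (MvPolynomial.le_totalDegree hmem).trans h
  have h2 : Finsupp.degree (δ + δ) ≤ 2 * e := h1
  have h3 : Finsupp.degree δ = (q j).totalDegree := MvPolynomial.degree_degLexDegree
  have h4 : (q k).totalDegree ≤ (q j).totalDegree :=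
    MvPolynomial.degLex_totalDegree_monotone (hmax' k)
  rw [map_add] at h2
  omega

/-- The line from `a` to the generic point. -/
def lineP {m : ℕ} (a : Fin m → ℝ) (i : Fin m) : Polynomial (MvPolynomial (Fin m) ℝ) :=
  Polynomial.C (C (a i)) + Polynomial.X * Polynomial.C (X i - C (a i))

lemma derivative_line {m : ℕ} (a : Fin m → ℝ) (g : MvPolynomial (Fin m) ℝ) :
    Polynomial.derivative (aeval (lineP a) g)
      = ∑ i, aeval (lineP a) (pderiv i g) * Polynomial.C (X i - C (a i)) := by
  induction g using MvPolynomial.induction_on with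
  | C r =>
    simp [Polynomial.algebraMap_apply, MvPolynomial.algebraMap_eq]
  | add p q hp hq => simp [hp, hq, add_mul, Finset.sum_add_distrib]
  | mul_X p j hp =>
    have hl : Polynomial.derivative (lineP a j) = Polynomial.C (X j - C (a j)) := by
      rw [lineP, Polynomial.derivative_add, Polynomial.derivative_C,
        Polynomial.derivative_mul, Polynomial.derivative_C, Polynomial.derivative_X]
      ring
    rw [map_mul, Polynomial.derivative_mul, hp, aeval_X, hl]
    simp only [Derivation.leibniz, pderiv_X, smul_eq_mul, map_add, map_mul, aeval_X, add_mul,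
      Finset.sum_add_distrib]
    rw [add_comm]
    congr 1
    · rw [Finset.sum_eq_single j]
      · simp
      · intro b _ hb
        simp [Pi.single_apply, hb.symm]
      · simp
    · rw [Finset.sum_mul]
      exact Finset.sum_congr rfl fun i _ => by ring

/-- All coefficients have total degree at most `e`. -/
def CoeffDeg {m : ℕ} (e : ℕ) (G : Polynomial (MvPolynomial (Fin m) ℝ)) : Prop :=
  ∀ n, (G.coeff n).totalDegree ≤ e

lemma CoeffDeg.sum {m e : ℕ} {ι : Type*} (s : Finset ι)
    (f : ι → Polynomial (MvPolynomial (Fin m) ℝ)) (h : ∀ i ∈ s, CoeffDeg e (f i)) :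
    CoeffDeg e (∑ i ∈ s, f i) := by
  intro n
  rw [Polynomial.finsetSum_coeff]
  exact MvPolynomial.totalDegree_finsetSum_le fun i hi => h i hi n

lemma CoeffDeg.mul {m e e' : ℕ} {G H : Polynomial (MvPolynomial (Fin m) ℝ)}
    (hG : CoeffDeg e G) (hH : CoeffDeg e' H) : CoeffDeg (e + e') (G * H) := by
  intro n
  rw [Polynomial.coeff_mul]
  refine MvPolynomial.totalDegree_finsetSum_le fun i _ => ?_
  exact (MvPolynomial.totalDegree_mul _ _).trans (add_le_add (hG _) (hH _))

lemma CoeffDeg.C {m e : ℕ} {p : MvPolynomial (Fin m) ℝ} (h : p.totalDegree ≤ e) :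
    CoeffDeg e (Polynomial.C p) := by
  intro n
  rw [Polynomial.coeff_C]
  split_ifs <;> simp [h]

lemma CoeffDeg.pow {m e : ℕ} {G : Polynomial (MvPolynomial (Fin m) ℝ)}
    (hG : CoeffDeg e G) (k : ℕ) : CoeffDeg (k * e) (G ^ k) := by
  induction k with
  | zero => simpa using CoeffDeg.C (m := m) (e := 0) (p := 1) (by simp)
  | succ k ih => rw [pow_succ, add_mul, one_mul]; exact ih.mul hG

lemma CoeffDeg.prod {m : ℕ} {ι : Type*} (s : Finset ι) (e : ι → ℕ)
    (f : ι → Polynomial (MvPolynomial (Fin m) ℝ)) (h : ∀ i ∈ s, CoeffDeg (e i) (f i)) :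
    CoeffDeg (∑ i ∈ s, e i) (∏ i ∈ s, f i) := by
  classical
  induction s using Finset.induction_on with
  | empty => simpa using CoeffDeg.C (m := m) (e := 0) (p := 1) (by simp)
  | insert i s hi ih =>
    rw [Finset.sum_insert hi, Finset.prod_insert hi]
    exact (h i (by simp)).mul (ih fun j hj => h j (by simp [hj]))

lemma CoeffDeg.line {m : ℕ} (a : Fin m → ℝ) (i : Fin m) : CoeffDeg 1 (lineP a i) := by
  intro n
  have h : (X i - MvPolynomial.C (a i) : MvPolynomial (Fin m) ℝ).totalDegree ≤ 1 :=
    (MvPolynomial.totalDegree_sub_C_le _ _).trans (by simp)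
  rw [lineP, Polynomial.coeff_add, Polynomial.coeff_mul_C, Polynomial.coeff_X,
    Polynomial.coeff_C]
  refine (MvPolynomial.totalDegree_add _ _).trans (max_le ?_ ?_)
  · split_ifs <;> simp
  · split_ifs
    · simpa using h
    · simp

lemma CoeffDeg.aeval_line {m d : ℕ} (a : Fin m → ℝ) (g : MvPolynomial (Fin m) ℝ)
    (hd : g.totalDegree ≤ d) : CoeffDeg d (aeval (lineP a) g) := by
  rw [MvPolynomial.aeval_def, MvPolynomial.eval₂_eq]
  refine CoeffDeg.sum _ _ fun α hα => ?_
  have hα' : α.sum (fun _ e => e) ≤ d := (MvPolynomial.le_totalDegree hα).trans hd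
  have h1 : CoeffDeg 0 (algebraMap ℝ (Polynomial (MvPolynomial (Fin m) ℝ)) (coeff α g)) := by
    rw [Polynomial.algebraMap_apply, MvPolynomial.algebraMap_eq]
    exact CoeffDeg.C (by simp)
  have h2 := CoeffDeg.prod α.support (fun i => α i * 1) (fun i => lineP a i ^ α i)
    (fun i _ => (CoeffDeg.line a i).pow (α i))
  intro n
  refine ((h1.mul h2) n).trans ?_
  simpa [Finsupp.sum] using hα'

lemma CoeffDeg.derivative {m e : ℕ} {G : Polynomial (MvPolynomial (Fin m) ℝ)}
    (hG : CoeffDeg e G) : CoeffDeg e (Polynomial.derivative G) := by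
  intro n
  rw [Polynomial.coeff_derivative]
  refine (MvPolynomial.totalDegree_mul _ _).trans ?_
  have : ((n : MvPolynomial (Fin m) ℝ) + 1).totalDegree = 0 := by
    have : ((n : MvPolynomial (Fin m) ℝ) + 1) = MvPolynomial.C ((n : ℝ) + 1) := by simp
    rw [this, MvPolynomial.totalDegree_C]
  rw [this]
  exact hG _

lemma CoeffDeg.eval {m e : ℕ} {G : Polynomial (MvPolynomial (Fin m) ℝ)}
    (hG : CoeffDeg e G) (t : ℝ) : (Polynomial.eval (MvPolynomial.C t) G).totalDegree ≤ e := by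
  rw [Polynomial.eval_eq_sum_range]
  refine MvPolynomial.totalDegree_finsetSum_le fun i _ => ?_
  refine (MvPolynomial.totalDegree_mul _ _).trans ?_
  rw [← map_pow, MvPolynomial.totalDegree_C]
  exact hG _

lemma hasDerivAt_functional {m : ℕ} (L : MvPolynomial (Fin m) ℝ →ₗ[ℝ] ℝ)
    (G : Polynomial (MvPolynomial (Fin m) ℝ)) (t : ℝ) :
    HasDerivAt (fun t : ℝ => L (Polynomial.eval (C t) G))
      (L (Polynomial.eval (C t) (Polynomial.derivative G))) t := by
  induction G using Polynomial.induction_on' with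
  | add p q hp hq =>
    simp only [Polynomial.eval_add, Polynomial.derivative_add, map_add]
    exact hp.add hq
  | monomial n p =>
    have key : ∀ (r : MvPolynomial (Fin m) ℝ) (s : ℝ), L (r * C s) = s * L r := by
      intro r s
      rw [mul_comm, MvPolynomial.C_mul', map_smul, smul_eq_mul]
    have e1 : (fun t : ℝ => L (Polynomial.eval (C t) (Polynomial.monomial n p)))
        = fun t => t ^ n * L p := by
      funext t
      rw [Polynomial.eval_monomial, ← map_pow, key]
    have e2 : L (Polynomial.eval (C t) (Polynomial.derivative (Polynomial.monomial n p)))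
        = (n * t ^ (n - 1)) * L p := by
      rw [Polynomial.derivative_monomial, Polynomial.eval_monomial, ← map_pow, key]
      have : (n : MvPolynomial (Fin m) ℝ) = C (n : ℝ) := by simp
      rw [this, key]
      ring
    rw [e1, e2]
    exact (hasDerivAt_pow n t).mul_const _

lemma jensen {m : ℕ} (g : MvPolynomial (Fin m) ℝ) (hg : IsSOSConvex g)
    (d : ℕ) (hdeven : Even d) (hdeg : g.totalDegree ≤ d)
    (y : (Fin m →₀ ℕ) → ℝ) (hy0 : y 0 = 1) (hy : MomMatPSD d y) :
    eval (fun i => y (Finsupp.single i 1)) g ≤ P3obj g y := by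
  obtain ⟨s, P, hP⟩ := hg
  set a : Fin m → ℝ := fun i => y (Finsupp.single i 1) with ha
  set L := riesz y with hL
  have hLC : ∀ c : ℝ, L (C c) = c := by
    intro c
    have : (C c : MvPolynomial (Fin m) ℝ) = monomial 0 c := rfl
    rw [this, hL, riesz_monomial, hy0, mul_one]
  have hLX : ∀ i, L (X i) = a i := by
    intro i
    have : (X i : MvPolynomial (Fin m) ℝ) = monomial (Finsupp.single i 1) 1 := rfl
    rw [this, hL, riesz_monomial, one_mul]
  set G := aeval (lineP a) g with hG
  let G1 := Polynomial.derivative G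
  let G2 := Polynomial.derivative G1
  have hd0 := hasDerivAt_functional L G
  have hd1 := hasDerivAt_functional L G1
  have hev0 : ∀ p : MvPolynomial (Fin m) ℝ,
      Polynomial.eval (C 0) (aeval (lineP a) p) = C (eval a p) := by
    intro p
    induction p using MvPolynomial.induction_on with
    | C r => simp [Polynomial.algebraMap_apply, MvPolynomial.algebraMap_eq]
    | add p q hp hq => simp only [map_add, Polynomial.eval_add, hp, hq]
    | mul_X p j hp =>
      simp only [map_mul, Polynomial.eval_mul, hp, aeval_X, eval_X]
      simp [lineP]
  have hev1 : ∀ p : MvPolynomial (Fin m) ℝ,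
      Polynomial.eval (C 1) (aeval (lineP a) p) = p := by
    intro p
    induction p using MvPolynomial.induction_on with
    | C r => simp [Polynomial.algebraMap_apply, MvPolynomial.algebraMap_eq]
    | add p q hp hq => simp only [map_add, Polynomial.eval_add, hp, hq]
    | mul_X p j hp =>
      simp only [map_mul, Polynomial.eval_mul, hp, aeval_X]
      simp [lineP]
  have h0 : L (Polynomial.eval (C 0) G) = eval a g := by rw [hG, hev0, hLC]
  have h1 : L (Polynomial.eval (C 1) G) = P3obj g y := by rw [hG, hev1, hL, riesz_apply]
  have h1' : L (Polynomial.eval (C 0) G1) = 0 := by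
    simp only [G1]
    rw [hG, derivative_line, Polynomial.eval_finsetSum, map_sum]
    refine Finset.sum_eq_zero fun i _ => ?_
    rw [Polynomial.eval_mul, hev0, Polynomial.eval_C, MvPolynomial.C_mul', map_smul, map_sub,
      hLC, hLX]
    simp
  have h2 : ∀ t : ℝ, 0 ≤ L (Polynomial.eval (C t) G2) := by
    intro t
    let q : Fin s → MvPolynomial (Fin m) ℝ := fun k =>
      ∑ i, Polynomial.eval (C t) (aeval (lineP a) (P k i)) * (X i - C (a i))
    have hsum : Polynomial.eval (C t) G2 = ∑ k, q k ^ 2 := by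
      have hH : ∀ i j, pderiv i (pderiv j g) = ∑ k, P k i * P k j := by
        intro i j
        have := congrFun (congrFun hP i) j
        simpa [polyHessian, Matrix.mul_apply] using this
      simp only [G2, G1]
      rw [hG, derivative_line, Polynomial.derivative_sum]
      simp only [Polynomial.derivative_mul, derivative_line, hH, Polynomial.derivative_C,
        mul_zero, add_zero, Polynomial.eval_finsetSum, Polynomial.eval_mul, map_sum, map_mul,
        Polynomial.eval_C, q, sq, Finset.sum_mul_sum]
      simp only [Finset.sum_mul]
      rw [Finset.sum_congr rfl fun _ _ => Finset.sum_comm]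
      rw [Finset.sum_comm]
      refine Finset.sum_congr rfl fun k _ => Finset.sum_congr rfl fun i _ =>
        Finset.sum_congr rfl fun j _ => ?_
      ring
    have hdegG : (∑ k, q k ^ 2).totalDegree ≤ 2 * (d / 2) := by
      rw [← hsum, Nat.two_mul_div_two_of_even hdeven]
      exact ((CoeffDeg.aeval_line a g hdeg).derivative.derivative).eval t
    rw [hsum, map_sum]
    exact Finset.sum_nonneg fun k _ => riesz_sq_nonneg d y hy _ (sos_degree q _ hdegG k)
  have hmono1 : Monotone fun t : ℝ => L (Polynomial.eval (C t) G1) :=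
    monotone_of_deriv_nonneg (fun t => (hd1 t).differentiableAt)
      (fun t => by rw [(hd1 t).deriv]; exact h2 t)
  have hmono0 : MonotoneOn (fun t : ℝ => L (Polynomial.eval (C t) G)) (Set.Icc 0 1) := by
    refine monotoneOn_of_deriv_nonneg (convex_Icc 0 1)
      (fun t _ => (hd0 t).continuousAt.continuousWithinAt)
      (fun t _ => (hd0 t).differentiableAt.differentiableWithinAt) ?_
    intro t ht
    rw [interior_Icc] at ht
    rw [(hd0 t).deriv, ← h1']
    exact hmono1 ht.1.le
  have := hmono0 (Set.left_mem_Icc.2 zero_le_one) (Set.right_mem_Icc.2 zero_le_one) zero_le_one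
  simp only [h0, h1] at this
  exact this

lemma point_feasible {m d : ℕ} (v : Fin m → ℝ) :
    MomMatPSD d (fun α => eval v (monomial α 1)) := by
  intro c _
  have : ∑ β ∈ c.support, ∑ γ ∈ c.support,
      c β * c γ * eval v (monomial (β + γ) (1 : ℝ))
      = (∑ β ∈ c.support, c β * eval v (monomial β (1 : ℝ))) ^ 2 := by
    rw [sq, Finset.sum_mul_sum]
    refine Finset.sum_congr rfl fun β _ => Finset.sum_congr rfl fun γ _ => ?_
    have : (monomial (β + γ) (1 : ℝ) : MvPolynomial (Fin m) ℝ)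
        = monomial β 1 * monomial γ 1 := by rw [MvPolynomial.monomial_mul, one_mul]
    rw [this, map_mul]
    ring
  rw [this]
  exact sq_nonneg _

lemma point_obj {m : ℕ} (v : Fin m → ℝ) (g : MvPolynomial (Fin m) ℝ) :
    P3obj g (fun α => eval v (monomial α 1)) = eval v g := by
  conv_rhs => rw [g.as_sum]
  rw [map_sum, P3obj]
  refine Finset.sum_congr rfl fun α _ => ?_
  simp [MvPolynomial.eval_monomial]

/-- Recovering a minimizer of an SOS-convex polynomial
optimization problem over a projected spectrahedron from its dual SDP. -/
theorem recover_poly_opt_minimizer {m N ν : ℕ}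
    (F0 : Matrix (Fin ν) (Fin ν) ℝ) (F : Fin m → Matrix (Fin ν) (Fin ν) ℝ)
    (M : Fin N → Matrix (Fin ν) (Fin ν) ℝ)
    (hF0 : F0.IsSymm) (hF : ∀ i, (F i).IsSymm) (hM : ∀ t, (M t).IsSymm)
    (g : MvPolynomial (Fin m) ℝ) (hg : IsSOSConvex g)
    (d : ℕ) (hdeven : Even d) (hdeg : g.totalDegree ≤ d)
    (hcompact : IsCompact (projSpec F0 F M))
    (hslater : ∃ (vbar : Fin m → ℝ) (ξbar : Fin N → ℝ),
      (F0 + ∑ i, vbar i • F i + ∑ t, ξbar t • M t).PosDef)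
    (hstrong : ∃ c, IsGreatest (P2vals F0 F M g d) c ∧
      IsLeast {val | ∃ y ξ, P3Feasible F0 F M d y ξ ∧ val = P3obj g y} c)
    (ybar : (Fin m →₀ ℕ) → ℝ) (ξbar : Fin N → ℝ)
    (hfeas : P3Feasible F0 F M d ybar ξbar)
    (hminP3 : ∀ y ξ, P3Feasible F0 F M d y ξ → P3obj g ybar ≤ P3obj g y) :
    (fun i => ybar (Finsupp.single i 1)) ∈ projSpec F0 F M ∧
    ∀ v ∈ projSpec F0 F M,
      eval (fun i => ybar (Finsupp.single i 1)) g ≤ eval v g := by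
  refine ⟨⟨ξbar, hfeas.1⟩, ?_⟩
  rintro v ⟨ξ, hξ⟩
  refine (jensen g hg d hdeven hdeg ybar hfeas.2.1 hfeas.2.2).trans ?_
  rw [← point_obj v g]
  refine hminP3 _ ξ ⟨?_, ?_, point_feasible v⟩
  · simpa [MvPolynomial.eval_monomial] using hξ
  · simp [MvPolynomial.eval_monomial]

end
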